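/- Let T = A_1 × ⋯ × A_k be a full factorial design and S ⊆ T a simple fraction of strength t. Suppose K ⊆ {1,…,k} with |K| = t + 1 and there is a block B of the partition 𝒞_K with S not independent of B (|S ∩ B|·|T| ≠ |S|·|B|). Then for every decomposition K = I ∪ J with I, J nonempty and disjoint, there exist u ∈ U_I and v ∈ U_J with ∑_{s ∈ S} u(s)·v(s) ≠ 0; hence Û_I and Û_J are not orthogonal, i.e., U_I and U_J are aliased in S. -/

import Mathlib

/-- The block of the partition `𝒞_I` of the full factorial design `T = ∏ i, A i`
determined by the values `r i` for `i ∈ I`:  `{x ∈ T : x i = r i for all i ∈ I}`. -/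
def block {k : ℕ} (A : Fin k → Type) [∀ i, Fintype (A i)] [∀ i, DecidableEq (A i)]
    (I : Finset (Fin k)) (r : ∀ i, A i) : Finset (∀ i, A i) :=
  Finset.univ.filter fun x => ∀ i ∈ I, x i = r i

/-- The partition `𝒞_I` of the full factorial design, viewed as the set of its blocks. -/
def CI {k : ℕ} (A : Fin k → Type) [∀ i, Fintype (A i)] [∀ i, DecidableEq (A i)]
    (I : Finset (Fin k)) : Set (Finset (∀ i, A i)) :=
  {B | ∃ r : ∀ i, A i, B = block A I r}

/-- Independence of two subsets of a finite set `T`:  `|A ∩ B| · |T| = |A| · |B|`. -/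
def indep {T : Type} [Fintype T] [DecidableEq T] (B C : Finset T) : Prop :=
  (B ∩ C).card * Fintype.card T = B.card * C.card

/-- A simple fraction `S ⊆ T` has strength `t ≥ 1` if `S` is independent of every block of
the partition `𝒞_I`, for every `I ⊆ {1,…,k}` with `|I| = t`. -/
def hasStrength {k : ℕ} (A : Fin k → Type) [∀ i, Fintype (A i)] [∀ i, DecidableEq (A i)]
    (S : Finset (∀ i, A i)) (t : ℕ) : Prop :=
  ∀ I : Finset (Fin k), I.card = t → ∀ B ∈ CI A I, indep S B

/-- The interaction subspace `U_I ⊆ ℝ^T`, defined inductively: `U_∅` is the space of constant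
functions, and for `I ≠ ∅`, `U_I` consists of the contrast functions in `U_{𝒞_I}` (functions
constant on each block of `𝒞_I` whose values sum to zero) that are orthogonal to `U_J` for
every `J ⊊ I`. -/
def UI {k : ℕ} (A : Fin k → Type) [∀ i, Fintype (A i)] [∀ i, DecidableEq (A i)] :
    Finset (Fin k) → Set ((∀ i, A i) → ℝ)
  | I =>
    if I = ∅ then {u | ∃ c : ℝ, u = fun _ => c}
    else
      {u | (∀ B ∈ CI A I, ∀ x ∈ B, ∀ y ∈ B, u x = u y) ∧ (∑ x, u x = 0) ∧
        ∀ J : Finset (Fin k), J ⊂ I → ∀ v ∈ UI A J, ∑ x, u x * v x = 0}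
  termination_by I => I.card
  decreasing_by exact Finset.card_lt_card (by assumption)

/-!
For a block `{x | ∀ i ∈ K, x i = r i}` of `𝒞_K`, consider the product over `i ∈ K` of the centred
indicators `1[x i = r i] - 1 / s_i`. Each factor sums to zero over `A i`, so the partial products
over `I` and `J` lie in `U_I` and `U_J`. Expanding the product over `K` gives a linear combination
of indicators of blocks of `𝒞_L` with `L ⊆ K`. The functional
`f ↦ |T| ∑_{s ∈ S} f s - |S| ∑_{x ∈ T} f x` vanishes on the indicator of a set exactly when `S` is
independent of that set. Strength `t` passes down to all smaller values, so the functional kills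
every term of the expansion but `L = K`, and does not kill that one. As the product over `K` sums to
zero over `T`, its sum over `S` is therefore nonzero.
-/

section PiSums

variable {ι R : Type*} {A : ι → Type*}

theorem dependsOn_finsetProd [CommMonoid R] (f : ∀ i, A i → R) (I : Finset ι) :
    DependsOn (fun x : ∀ i, A i ↦ ∏ i ∈ I, f i (x i)) I :=
  fun _ _ hxy ↦ Finset.prod_congr rfl fun i hi ↦ by rw [hxy i hi]

variable [Fintype ι] [DecidableEq ι] [∀ i, Fintype (A i)]

theorem sum_coord_mul_eq_zero [NonUnitalNonAssocSemiring R] {i : ι} {f : A i → R}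
    (hf : ∑ a, f a = 0) {g : (∀ i, A i) → R} (hg : DependsOn g {i}ᶜ) : ∑ x, f (x i) * g x = 0 := by
  obtain ⟨h, rfl⟩ := dependsOn_iff_exists_comp.1 hg
  have hsplit (a : A i) (y : ∀ j : {j // j ≠ i}, A j) :
      f ((Equiv.piSplitAt i A).symm (a, y) i) *
        (h ∘ Set.domRestrict {i}ᶜ) ((Equiv.piSplitAt i A).symm (a, y)) = f a * h y := by
    have hrestrict : Set.domRestrict {i}ᶜ ((Equiv.piSplitAt i A).symm (a, y)) = y := by
      ext ⟨j, hj⟩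
      exact dif_neg hj
    simp [hrestrict]
  rw [← (Equiv.piSplitAt i A).symm.sum_comp, Fintype.sum_prod_type_right]
  simp only [hsplit, ← Finset.sum_mul, hf, zero_mul, Finset.sum_const_zero]

theorem sum_finsetProd_mul_eq_zero [CommSemiring R] {I : Finset ι} {i : ι} (hi : i ∈ I)
    {f : ∀ i, A i → R} (hf : ∑ a, f i a = 0) {g : (∀ i, A i) → R} (hg : DependsOn g {i}ᶜ) :
    ∑ x, (∏ j ∈ I, f j (x j)) * g x = 0 := by
  have herase : DependsOn (fun x ↦ (∏ j ∈ I.erase i, f j (x j)) * g x) {i}ᶜ :=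
    fun _ _ hxy ↦ congrArg₂ (· * ·)
      (dependsOn_finsetProd f (I.erase i) fun j hj ↦ hxy j (Finset.ne_of_mem_erase hj)) (hg hxy)
  rw [← sum_coord_mul_eq_zero hf herase]
  simp only [← mul_assoc, Finset.mul_prod_erase I (fun j ↦ f j _) hi]

end PiSums

section Discrepancy

variable {T : Type*} [Fintype T]

/-- The discrepancy of `f` with respect to `S ⊆ T`: up to the factor `|S| * |T|`, the difference
between the means of `f` over `S` and over `T`, with denominators cleared as in `indep`. -/
noncomputable def discrepancy (S : Finset T) : (T → ℝ) →ₗ[ℝ] ℝ :=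
  (Fintype.card T : ℝ) • ∑ s ∈ S, LinearMap.proj s - (S.card : ℝ) • ∑ x, LinearMap.proj x

theorem discrepancy_apply (S : Finset T) (f : T → ℝ) :
    discrepancy S f = Fintype.card T * ∑ s ∈ S, f s - S.card * ∑ x, f x := by
  simp [discrepancy]

end Discrepancy

section Indep

variable {T : Type} [Fintype T] [DecidableEq T]

theorem discrepancy_indicator_eq_zero_iff {S C : Finset T} :
    discrepancy S (Set.indicator C 1) = 0 ↔ indep S C := by
  simp only [discrepancy_apply, Set.indicator_apply, Finset.mem_coe, Pi.one_apply,
    Finset.sum_boole, Finset.filter_mem_eq_inter, Finset.univ_inter, sub_eq_zero, indep]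
  rw [mul_comm]
  norm_cast

theorem indep_biUnion {ι : Type*} {S : Finset T} {s : Finset ι} {C : ι → Finset T}
    (hC : (s : Set ι).PairwiseDisjoint C) (h : ∀ i ∈ s, indep S (C i)) :
    indep S (s.biUnion C) := by
  have hSC : (s : Set ι).PairwiseDisjoint fun i ↦ S ∩ C i :=
    hC.mono fun _ ↦ Finset.inter_subset_right
  rw [indep, Finset.inter_biUnion, Finset.card_biUnion hSC, Finset.card_biUnion hC,
    Finset.sum_mul, Finset.mul_sum]
  exact Finset.sum_congr rfl h

end Indep

section CenteredIndicator

variable {α : Type*} [Fintype α] [DecidableEq α]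

/-- The indicator of `{a}` minus its mean over `α`. -/
noncomputable def centeredIndicator (a b : α) : ℝ :=
  (if b = a then 1 else 0) - (Fintype.card α : ℝ)⁻¹

theorem sum_centeredIndicator (a : α) : ∑ b, centeredIndicator a b = 0 := by
  have : Nonempty α := ⟨a⟩
  simp [centeredIndicator]

end CenteredIndicator

section FactorialDesign

variable {k : ℕ} {A : Fin k → Type} [∀ i, Fintype (A i)] [∀ i, DecidableEq (A i)]
  {S : Finset (∀ i, A i)} {I J K : Finset (Fin k)}

theorem mem_block {r x : ∀ i, A i} : x ∈ block A I r ↔ ∀ i ∈ I, x i = r i := by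
  simp [block]

theorem block_eq_biUnion_block_insert {i : Fin k} (hi : i ∉ I) (r : ∀ i, A i) :
    block A I r = Finset.univ.biUnion fun a ↦ block A (insert i I) (Function.update r i a) := by
  ext x
  have hupdate (a : A i) : (∀ j ∈ I, x j = Function.update r i a j) ↔ ∀ j ∈ I, x j = r j :=
    forall₂_congr fun j hj ↦ by rw [Function.update_of_ne (ne_of_mem_of_not_mem hj hi)]
  simp [mem_block, hupdate]

theorem pairwise_disjoint_block_update {i : Fin k} (hi : i ∈ I) (r : ∀ i, A i) :
    Pairwise (Function.onFun Disjoint fun a ↦ block A I (Function.update r i a)) := by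
  intro a b hab
  refine Finset.disjoint_left.2 fun x hxa hxb ↦ hab ?_
  simpa using (mem_block.1 hxa i hi).symm.trans (mem_block.1 hxb i hi)

theorem hasStrength.of_succ {t : ℕ} (hS : hasStrength A S (t + 1)) (ht : t < k) :
    hasStrength A S t := by
  rintro I hI _ ⟨r, rfl⟩
  obtain ⟨i, -, hi⟩ : ∃ i ∈ Finset.univ, i ∉ I :=
    Finset.exists_mem_notMem_of_card_lt_card (by simpa [hI] using ht)
  rw [block_eq_biUnion_block_insert hi]
  exact indep_biUnion ((pairwise_disjoint_block_update (I.mem_insert_self i) r).set_pairwise _)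
    fun a _ ↦ hS _ (by rw [Finset.card_insert_of_notMem hi, hI]) _ ⟨_, rfl⟩

theorem hasStrength.of_le {s t : ℕ} (hS : hasStrength A S t) (hst : s ≤ t) (ht : t ≤ k) :
    hasStrength A S s :=
  Nat.decreasingInduction (fun _ hn h ↦ h.of_succ (hn.trans_le ht)) hS hst

theorem hasStrength.indep_block_of_ssubset {t : ℕ} (hS : hasStrength A S t)
    (hK : K.card = t + 1) (hIK : I ⊂ K) (r : ∀ i, A i) : indep S (block A I r) := by
  have hIt : I.card < t + 1 := hK ▸ Finset.card_lt_card hIK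
  have htk : t + 1 ≤ k := hK ▸ card_finset_fin_le K
  exact hS.of_le (by omega) (by omega) I rfl _ ⟨r, rfl⟩

/-- The centred analogue of the indicator of the block of `𝒞_I` through `r`: the product over
`i ∈ I` of the centred indicators of `r i`. It is the element of `U_I` used to detect aliasing. -/
noncomputable def blockContrast (I : Finset (Fin k)) (r x : ∀ i, A i) : ℝ :=
  ∏ i ∈ I, centeredIndicator (r i) (x i)

theorem dependsOn_blockContrast (I : Finset (Fin k)) (r : ∀ i, A i) :
    DependsOn (blockContrast I r) I :=
  dependsOn_finsetProd (fun i ↦ centeredIndicator (r i)) I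

theorem sum_blockContrast_mul_eq_zero (hIJ : ¬ I ⊆ J) (r : ∀ i, A i) {g : (∀ i, A i) → ℝ}
    (hg : DependsOn g J) : ∑ x, blockContrast I r x * g x = 0 := by
  obtain ⟨i, hiI, hiJ⟩ := Finset.not_subset.1 hIJ
  exact sum_finsetProd_mul_eq_zero hiI (sum_centeredIndicator (r i))
    (hg.mono (Set.subset_compl_singleton_iff.2 hiJ))

theorem sum_blockContrast_eq_zero (hI : I.Nonempty) (r : ∀ i, A i) :
    ∑ x, blockContrast I r x = 0 := by
  have hconst : DependsOn (fun _ : ∀ i, A i ↦ (1 : ℝ)) (∅ : Finset (Fin k)) := by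
    simpa using dependsOn_const (1 : ℝ)
  simpa using sum_blockContrast_mul_eq_zero (by simpa using hI.ne_empty) r hconst

theorem dependsOn_of_mem_UI {u : (∀ i, A i) → ℝ} (hu : u ∈ UI A I) : DependsOn u I := by
  rw [UI] at hu
  split_ifs at hu with hI
  · obtain ⟨c, rfl⟩ := hu
    exact fun _ _ _ ↦ rfl
  · exact fun x y hxy ↦ hu.1 _ ⟨y, rfl⟩ x (mem_block.2 hxy) y (mem_block.2 fun _ _ ↦ rfl)

theorem blockContrast_mem_UI (hI : I.Nonempty) (r : ∀ i, A i) : blockContrast I r ∈ UI A I := by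
  rw [UI, if_neg hI.ne_empty]
  refine ⟨?_, sum_blockContrast_eq_zero hI r, fun J hJI v hv ↦
    sum_blockContrast_mul_eq_zero hJI.2 r (dependsOn_of_mem_UI hv)⟩
  rintro _ ⟨q, rfl⟩ x hx y hy
  exact dependsOn_blockContrast I r fun i hi ↦
    (mem_block.1 hx i hi).trans (mem_block.1 hy i hi).symm

theorem blockContrast_union (hIJ : Disjoint I J) (r x : ∀ i, A i) :
    blockContrast (I ∪ J) r x = blockContrast I r x * blockContrast J r x :=
  Finset.prod_union hIJ

theorem blockContrast_eq_sum_indicator_block (K : Finset (Fin k)) (r : ∀ i, A i) :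
    blockContrast K r = ∑ L ∈ K.powerset,
      (∏ i ∈ K \ L, -(Fintype.card (A i) : ℝ)⁻¹) • Set.indicator (block A L r) 1 := by
  ext x
  simp only [blockContrast, centeredIndicator, sub_eq_add_neg, Finset.prod_add, Finset.prod_boole,
    Finset.sum_apply, Pi.smul_apply, smul_eq_mul, Set.indicator_apply, Finset.mem_coe, mem_block,
    Pi.one_apply, mul_comm]
  congr!

theorem discrepancy_blockContrast {r : ∀ i, A i} (hS : ∀ L ⊂ K, indep S (block A L r)) :
    discrepancy S (blockContrast K r) = discrepancy S (Set.indicator (block A K r) 1) := by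
  rw [blockContrast_eq_sum_indicator_block, map_sum,
    Finset.sum_eq_single_of_mem K (Finset.mem_powerset_self K)]
  · simp
  · intro L hL hLK
    have hind : indep S (block A L r) := hS L ((Finset.mem_powerset.1 hL).ssubset_of_ne hLK)
    rw [map_smul, discrepancy_indicator_eq_zero_iff.2 hind, smul_zero]

theorem aliased_of_not_indep_general {r : ∀ i, A i} (hS : ∀ L ⊂ K, indep S (block A L r))
    (hK : ¬ indep S (block A K r)) (hI : I.Nonempty) (hJ : J.Nonempty) (hIJ : Disjoint I J)
    (hunion : I ∪ J = K) : ∃ u ∈ UI A I, ∃ v ∈ UI A J, ∑ s ∈ S, u s * v s ≠ 0 := by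
  refine ⟨_, blockContrast_mem_UI hI r, _, blockContrast_mem_UI hJ r, fun hsum ↦ hK ?_⟩
  simp only [← blockContrast_union hIJ, hunion] at hsum
  have hKne : K.Nonempty := hunion ▸ hI.inl
  rw [← discrepancy_indicator_eq_zero_iff, ← discrepancy_blockContrast hS, discrepancy_apply, hsum,
    sum_blockContrast_eq_zero hKne r, mul_zero, mul_zero, sub_zero]

end FactorialDesign

/-- Let `S` be a simple fraction of strength `t`, `K ⊆ {1,…,k}` with `|K| = t + 1`, and `B`
a block of `𝒞_K` with `S` not independent of `B`. Then for every decomposition `K = I ∪ J`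
with `I, J` nonempty and disjoint, there are `u ∈ U_I` and `v ∈ U_J` with
`∑_{s ∈ S} u(s)·v(s) ≠ 0`; hence `Û_I` and `Û_J` are not orthogonal, i.e. `U_I` and `U_J`
are aliased in `S`. -/
theorem aliased_of_not_indep {k : ℕ} (hk : 1 ≤ k) (A : Fin k → Type)
    [∀ i, Fintype (A i)] [∀ i, DecidableEq (A i)] [∀ i, Nonempty (A i)]
    (S : Finset (∀ i, A i)) (t : ℕ) (ht : 1 ≤ t) (hS : hasStrength A S t)
    (K : Finset (Fin k)) (hK : K.card = t + 1)
    (B : Finset (∀ i, A i)) (hB : B ∈ CI A K) (hSB : ¬ indep S B) :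
    ∀ I J : Finset (Fin k), I.Nonempty → J.Nonempty → Disjoint I J → I ∪ J = K →
      ∃ u ∈ UI A I, ∃ v ∈ UI A J, ∑ s ∈ S, u s * v s ≠ 0 := by
  obtain ⟨r, rfl⟩ := hB
  exact fun _ _ ↦ aliased_of_not_indep_general
    (fun _ hL ↦ hS.indep_block_of_ssubset hK hL r) hSB
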